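/- Let I be a monomial ideal in S = K[x₁,…,xₙ] and, for i ≥ 0, let a_i(S/I) denote the number of monomials m with β_{i,m}(S/I) ≠ 0. Then for all integers i₁, i₂ ≥ 0, a_{i₁+i₂}(S/I) ≤ a_{i₁}(S/I) · a_{i₂}(S/I). -/

import Mathlib

open Finsupp

noncomputable section

variable (K : Type) [Field K]

section Core
variable (P : Type) [Preorder P]

/-- Order chains with `n` elements of the poset `P`, written as strictly
decreasing tuples `(x₀ > x₁ > ⋯ > x_{n-1})`. -/
def OChain (n : ℕ) : Type := {c : Fin n → P // StrictAnti c}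

/-- The chain group in "level" `n`: the `K`-vector space with basis the order chains with
`n` elements.  Level `n` corresponds to homological degree `n - 1`; in particular
`CGrp K P 0 ≅ K` is the reduced part `C̃₋₁`. -/
abbrev CGrp (n : ℕ) : Type := OChain P n →₀ K

/-- Deletion of the `k`-th entry of an order chain. -/
def odel {n : ℕ} (k : Fin (n + 1)) (c : OChain P (n + 1)) : OChain P n :=
  ⟨c.1 ∘ k.succAbove, c.2.comp_strictMono (Fin.strictMono_succAbove k)⟩

/-- The simplicial boundary map (of the reduced simplicial chain complex of the order
complex), from level `n+1` to level `n`. -/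
def cbdry (n : ℕ) : CGrp K P (n + 1) →ₗ[K] CGrp K P n :=
  Finsupp.lsum K fun c => ∑ k : Fin (n + 1), ((-1 : K) ^ (k : ℕ)) • Finsupp.lsingle (odel P k c)

/-- The cycles in level `n` (every level-0 chain, i.e. multiple of the empty chain,
is a cycle). -/
def cyclesAt : (n : ℕ) → Submodule K (CGrp K P n)
  | 0 => ⊤
  | (n + 1) => LinearMap.ker (cbdry K P n)

/-- The boundaries in level `n`. -/
def boundariesIn (n : ℕ) : Submodule K (CGrp K P n) :=
  LinearMap.range (cbdry K P n)

/-- `H̃_{n-1}(P) ≠ 0`: nontriviality of the reduced simplicial homology (with coefficients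
in `K`) of the order complex of `P` in degree `n - 1` (level `n`). -/
def RHomNontrivial (n : ℕ) : Prop := ¬ cyclesAt K P n ≤ boundariesIn K P n

end Core

section Monomial

variable (nv : ℕ)

/-- The polynomial ring `S = K[x₁, …, xₙ]`. -/
abbrev PolyS : Type := MvPolynomial (Fin nv) K

/-- The monomial `x^d` attached to an exponent vector `d`. -/
def monOf (d : Fin nv → ℕ) : PolyS K nv :=
  MvPolynomial.monomial (Finsupp.equivFunOnFinite.symm d) 1

/-- `I` is a monomial ideal: it is generated by monomials. -/
def IsMonomialIdeal (I : Ideal (PolyS K nv)) : Prop :=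
  ∃ G : Set (Fin nv → ℕ), I = Ideal.span (monOf K nv '' G)

/-- The minimal monomial generating set `G(I)` of a monomial ideal: exponent vectors of
the monomials of `I` that are minimal with respect to divisibility. -/
def minGens (I : Ideal (PolyS K nv)) : Set (Fin nv → ℕ) :=
  {d | monOf K nv d ∈ I ∧ ∀ d' < d, monOf K nv d' ∉ I}

/-- The underlying set of the LCM-lattice of a monomial ideal: all least common multiples
(= pointwise suprema of exponent vectors) of subsets of the minimal generators, ordered by
divisibility (= the pointwise order).  The empty subset contributes `lcm ∅ = 1`, i.e. the
zero exponent vector. -/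
def lcmSet (I : Ideal (PolyS K nv)) : Set (Fin nv → ℕ) :=
  {m | ∃ B : Finset (Fin nv → ℕ), ↑B ⊆ minGens K nv I ∧ m = B.sup id}

/-- The open interval `(1, m)` in the LCM-lattice of `I`. -/
def openInt (I : Ideal (PolyS K nv)) (m : Fin nv → ℕ) : Set (Fin nv → ℕ) :=
  {p | p ∈ lcmSet K nv I ∧ 0 < p ∧ p < m}

/-- Total degree of a monomial given by its exponent vector. -/
def degTot (m : Fin nv → ℕ) : ℕ := ∑ r, m r

open Classical in
/-- The multigraded Betti number `β_{i,m}(S/I) = dim_K Tor_i^S(S/I, K)_m` of a monomial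
ideal, via the Gasharov–Peeva–Welker formula: for `i ≥ 1` and `m` in the LCM-lattice,
`β_{i,m}(S/I) = dim_K H̃_{i-2}((1, m))` (reduced homology of the order complex of the open
interval in the LCM-lattice; degree `i-2` is level `i-1`; the dimension of the homology is
the dimension of the cycles minus the dimension of the boundaries); moreover `β_{0,m} = 1` iff
`m = 1`, and `β_{i,m} = 0` for `m` outside the LCM-lattice. -/
noncomputable def multiBetti (I : Ideal (PolyS K nv)) (i : ℕ) (m : Fin nv → ℕ) : ℕ :=
  if i = 0 then (if m = 0 then 1 else 0)
  else if m ∈ lcmSet K nv I ∧ m ≠ 0 then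
    Module.finrank K ↥(cyclesAt K ↥(openInt K nv I m) (i - 1)) -
      Module.finrank K ↥(boundariesIn K ↥(openInt K nv I m) (i - 1))
  else 0

/-- The graded Betti number `β_{i,j}(S/I) = dim_K Tor_i^S(S/I, K)_j`: the sum of the
multigraded Betti numbers over the multidegrees of total degree `j`. -/
noncomputable def betti (I : Ideal (PolyS K nv)) (i j : ℕ) : ℕ :=
  ∑ᶠ m ∈ {m : Fin nv → ℕ | degTot nv m = j}, multiBetti K nv I i m

/-- The maximal shift `t_i(S/I) = max { j : β_{i,j}(S/I) ≠ 0 }`, with `t_i(S/I) = 0`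
if `β_{i,j}(S/I) = 0` for all `j` (the supremum over the empty set of naturals is `0`). -/
noncomputable def tshift (I : Ideal (PolyS K nv)) (i : ℕ) : ℕ :=
  sSup {j | betti K nv I i j ≠ 0}

/-- `a_i(S/I)`: the number of multidegrees `m` with `β_{i,m}(S/I) ≠ 0`. -/
noncomputable def acount (I : Ideal (PolyS K nv)) (i : ℕ) : ℕ :=
  {m : Fin nv → ℕ | multiBetti K nv I i m ≠ 0}.ncard

end Monomial

/-!
The Betti numbers in question are those of a functor on the lcm-lattice `L`, the simple functor
supported at `⊥`. Free functors on `L` are free modules with basis elements labelled by `L`, and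
tensoring a resolution `X` with the simple functor at `m` keeps only its strand of label `m`.

For two resolutions `X` and `Y`, the basis of `X ⊗ Y` is labelled by joins, and its strand at `m` is
a double complex. Since `X` is exact away from `⊥`, it is contractible on labels `≥ z` for any
`z > ⊥`; hence all rows and columns of the double complex are exact, except those along the axes,
which are the strands of `X` and `Y` themselves. Chasing bicycles along an antidiagonal shows that
acyclicity at `m` does not depend on the resolution, and that it holds in degree `p + q` whenever
the entry `(p, q)` vanishes. So if the homology at `m` is nonzero in degree `p + q`, then `m` is the
join of a label of `X` in degree `p` and one of `Y` in degree `q`. In a minimal resolution every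
label carries homology, so that `m` is determined by a pair of nonvanishing multidegrees. The bar
resolution, spanned by the chains of elements `> ⊥`, translates this into the homology of intervals.
-/

section Exactness

open LinearMap

variable {R : Type*} [Ring R] {M N : ℕ → Type*} [∀ n, AddCommGroup (M n)] [∀ n, Module R (M n)]
  [∀ n, AddCommGroup (N n)] [∀ n, Module R (N n)]

/-- The cycles of a sequence of linear maps `⋯ → M 1 → M 0`, all of `M 0` in degree zero. -/
def cycles (d : ∀ n, M (n + 1) →ₗ[R] M n) : ∀ n, Submodule R (M n)
  | 0 => ⊤
  | n + 1 => ker (d n)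

/-- Vanishing of the `n`-th homology of the sequence `⋯ → M 1 → M 0 → 0`. -/
def IsExactAt (d : ∀ n, M (n + 1) →ₗ[R] M n) (n : ℕ) : Prop := cycles d n ≤ range (d n)

variable {d : ∀ n, M (n + 1) →ₗ[R] M n} {d' : ∀ n, N (n + 1) →ₗ[R] N n}

lemma map_mem_cycles (hd : ∀ n x, d n (d (n + 1) x) = 0) (n : ℕ) (x : M (n + 1)) :
    d n x ∈ cycles d n := by
  cases n with
  | zero => trivial
  | succ n => exact hd n x

lemma isExactAt_congr (e : ∀ n, M n ≃ₗ[R] N n) (he : ∀ n x, e n (d n x) = d' n (e (n + 1) x))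
    (n : ℕ) : IsExactAt d n ↔ IsExactAt d' n := by
  have mem_cycles : ∀ x, e n x ∈ cycles d' n ↔ x ∈ cycles d n := by
    cases n with
    | zero => exact fun _ => Iff.rfl
    | succ n => simp [cycles, ← he]
  simp only [IsExactAt, SetLike.le_def, mem_range, (e n).surjective.forall,
    (e (n + 1)).surjective.exists, mem_cycles, ← he, (e n).injective.eq_iff]

lemma isExactAt_neg (n : ℕ) : IsExactAt (fun n => -d n) n ↔ IsExactAt d n := by
  cases n <;> simp [IsExactAt, cycles, range_neg, ker_neg]

lemma isExactAt_succ_iff [Subsingleton (M 0)] (n : ℕ) :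
    IsExactAt d (n + 1) ↔ IsExactAt (M := fun n => M (n + 1)) (fun n => d (n + 1)) n := by
  cases n with
  | zero => simp [IsExactAt, cycles, Subsingleton.elim (d 0) 0]
  | succ n => rfl

end Exactness

section DoubleComplex

variable {R : Type*} [Ring R] {D : ℕ → ℕ → Type*} [∀ p q, AddCommGroup (D p q)]
  [∀ p q, Module R (D p q)]

/-- A first-quadrant double complex whose rows and columns are exact, the zeroth row and the zeroth
column excepted. -/
structure IsExactOffAxes (dh : ∀ q p, D (p + 1) q →ₗ[R] D p q)
    (dv : ∀ p q, D p (q + 1) →ₗ[R] D p q) : Prop where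
  comm : ∀ p q x, dh q p (dv (p + 1) q x) = dv p q (dh (q + 1) p x)
  dh_dh : ∀ q p x, dh q p (dh q (p + 1) x) = 0
  dv_dv : ∀ p q x, dv p q (dv p (q + 1) x) = 0
  row_exact : ∀ q p, IsExactAt (M := fun p => D p (q + 1)) (dh (q + 1)) p
  col_exact : ∀ p q, IsExactAt (dv (p + 1)) q

/-- Every bicycle in position `(p, q)` lifts along the vertical differential to a horizontal
cycle. Along an antidiagonal these conditions are passed on by `BicycleLift.zigzag`. -/
def BicycleLift (dh : ∀ q p, D (p + 1) q →ₗ[R] D p q) (dv : ∀ p q, D p (q + 1) →ₗ[R] D p q)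
    (p q : ℕ) : Prop :=
  cycles (M := fun p => D p q) (dh q) p ⊓ cycles (dv p) q ≤
    (cycles (M := fun p => D p (q + 1)) (dh (q + 1)) p).map (dv p q)

variable {dh : ∀ q p, D (p + 1) q →ₗ[R] D p q} {dv : ∀ p q, D p (q + 1) →ₗ[R] D p q}

lemma BicycleLift.zigzag (hD : IsExactOffAxes dh dv) {p q : ℕ} (h : BicycleLift dh dv (p + 1) q) :
    BicycleLift dh dv p (q + 1) := by
  rintro z ⟨hzh, hzv⟩
  obtain ⟨w, rfl⟩ := hD.row_exact q p hzh
  have hw : dh q p (dv (p + 1) q w) = 0 := (hD.comm p q w).trans hzv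
  obtain ⟨s, hs, hsw⟩ := h ⟨hw, map_mem_cycles (hD.dv_dv (p + 1)) q w⟩
  obtain ⟨u, hu⟩ := hD.col_exact p (q + 1) (x := w - s)
    (show dv (p + 1) q (w - s) = 0 by rw [map_sub, hsw, sub_self])
  refine ⟨dh (q + 2) p u, map_mem_cycles (M := fun p => D p (q + 2)) (hD.dh_dh (q + 2)) p u, ?_⟩
  rw [← hD.comm, hu, map_sub, show dh (q + 1) p s = 0 from hs, sub_zero]

lemma BicycleLift.isExactAt (hD : IsExactOffAxes dh dv) {p q : ℕ} (h : BicycleLift dh dv p q) :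
    IsExactAt (dv 0) (p + q) := by
  induction p generalizing q with
  | zero =>
    rw [zero_add]
    intro z hz
    obtain ⟨t, -, ht⟩ := h ⟨trivial, hz⟩
    exact ⟨t, ht⟩
  | succ p ih =>
    rw [Nat.succ_add_eq_add_succ]
    exact ih (h.zigzag hD)

lemma IsExactOffAxes.isExactAt_of_subsingleton (hD : IsExactOffAxes dh dv) {p q : ℕ}
    [Subsingleton (D p q)] : IsExactAt (dv 0) (p + q) := by
  refine BicycleLift.isExactAt (p := p) hD fun z _ => ?_
  rw [Subsingleton.elim z 0]
  exact zero_mem _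

lemma IsExactOffAxes.isExactAt_of_row_zero (hD : IsExactOffAxes dh dv) {n : ℕ}
    (hn : IsExactAt (M := fun p => D p 0) (dh 0) n) : IsExactAt (dv 0) n := by
  refine BicycleLift.isExactAt (p := n) (q := 0) hD fun z hz => ?_
  obtain ⟨s, rfl⟩ := hn hz.1
  obtain ⟨u, rfl⟩ := hD.col_exact n 0 (x := s) trivial
  exact ⟨dh 1 n u, map_mem_cycles (M := fun p => D p 1) (hD.dh_dh 1) n u, (hD.comm n 0 u).symm⟩

end DoubleComplex

section Strands

variable {R : Type*} [CommRing R] {ι κ L : Type*} {l : ι → L} {l' : κ → L}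

variable (R) in
/-- The strand of label `m` of a free module with labelled basis: the free module on the basis
elements of label `m`. It stands for the quotient of the span of the labels `≤ m` by the span of
the labels `< m`. -/
abbrev Strand (l : ι → L) (m : L) : Type _ := (l ⁻¹' {m}) →₀ R

/-- The block, at the label `m`, of a linear map between free modules with labelled bases. -/
def strandMap (l : ι → L) (l' : κ → L) (m : L) (f : (ι →₀ R) →ₗ[R] (κ →₀ R)) :
    Strand R l m →ₗ[R] Strand R l' m :=
  lsubtypeDomain (M := R) (R := R) (l' ⁻¹' {m}) ∘ₗ f ∘ₗ lmapDomain R R Subtype.val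

lemma strandMap_single (m : L) (f : (ι →₀ R) →ₗ[R] (κ →₀ R)) (i : l ⁻¹' {m}) :
    strandMap l l' m f (single i 1) = subtypeDomain (· ∈ l' ⁻¹' {m}) (f (single i.1 1)) := by
  simp [strandMap, lsubtypeDomain_apply]

lemma subtypeDomain_single {s : Set ι} (i : s) :
    subtypeDomain (· ∈ s) (single i.1 (1 : R)) = single i 1 := by
  ext j
  exact single_apply_left Subtype.val_injective i j 1

lemma subtypeDomain_eq_zero {s t : Set ι} (hst : Disjoint s t) {x : ι →₀ R}
    (hx : x ∈ supported R R t) : subtypeDomain (· ∈ s) x = 0 := by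
  ext i
  exact (mem_supported' R x).1 hx i (Set.disjoint_left.1 hst i.2)

lemma strandMap_id (m : L) :
    strandMap l l m (LinearMap.id : (ι →₀ R) →ₗ[R] (ι →₀ R)) = LinearMap.id := by
  ext i : 2
  simp [strandMap_single, subtypeDomain_single]

lemma strandMap_zero (m : L) : strandMap l l' m (0 : (ι →₀ R) →ₗ[R] (κ →₀ R)) = 0 := by
  simp [strandMap]

lemma strandMap_add (m : L) (f g : (ι →₀ R) →ₗ[R] (κ →₀ R)) :
    strandMap l l' m (f + g) = strandMap l l' m f + strandMap l l' m g := by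
  simp [strandMap, LinearMap.add_comp, LinearMap.comp_add]

lemma isExactAt_strandMap_congr {ι κ : ℕ → Type*} {l : ∀ n, ι n → L} {l' : ∀ n, κ n → L}
    {d : ∀ n, (ι (n + 1) →₀ R) →ₗ[R] (ι n →₀ R)} {d' : ∀ n, (κ (n + 1) →₀ R) →ₗ[R] (κ n →₀ R)}
    (σ : ∀ n, ι n ≃ κ n) (hσ : ∀ n i, l' n (σ n i) = l n i)
    (hd : ∀ n, lmapDomain R R (σ n) ∘ₗ d n = d' n ∘ₗ lmapDomain R R (σ (n + 1))) (m : L) (n : ℕ) :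
    IsExactAt (M := fun n => Strand R (l n) m) (fun n => strandMap (l (n + 1)) (l n) m (d n)) n ↔
      IsExactAt (M := fun n => Strand R (l' n) m)
        (fun n => strandMap (l' (n + 1)) (l' n) m (d' n)) n := by
  have hσ' : ∀ n i, i ∈ l n ⁻¹' {m} ↔ σ n i ∈ l' n ⁻¹' {m} := fun n i => by simp [hσ]
  let e n : Strand R (l n) m ≃ₗ[R] Strand R (l' n) m :=
    Finsupp.domLCongr ((σ n).subtypeEquiv (hσ' n))
  suffices he : ∀ n, (e n : _ →ₗ[R] _) ∘ₗ strandMap (l (n + 1)) (l n) m (d n) =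
      strandMap (l' (n + 1)) (l' n) m (d' n) ∘ₗ (e (n + 1) : _ →ₗ[R] _) from
    isExactAt_congr e (fun n => LinearMap.congr_fun (he n)) n
  intro n
  ext i : 2
  have hdi := LinearMap.congr_fun (hd n) (single i.1 1)
  simp only [LinearMap.comp_apply, lmapDomain_apply, mapDomain_single] at hdi
  ext j
  simp [e, strandMap_single, ← hdi, equivMapDomain_eq_mapDomain]

end Strands

section Labels

variable {R : Type*} [CommRing R] {ι κ μ : Type*}

lemma supported_le_comap_iff {M : Type*} [AddCommGroup M] [Module R M] {s : Set ι}
    {N : Submodule R M} {f : (ι →₀ R) →ₗ[R] M} :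
    supported R R s ≤ N.comap f ↔ ∀ i ∈ s, f (single i 1) ∈ N := by
  rw [supported_eq_span_single, Submodule.span_le, Set.image_subset_iff]
  rfl

lemma eqOn_supported {M : Type*} [AddCommGroup M] [Module R M] {s : Set ι}
    {f g : (ι →₀ R) →ₗ[R] M} (h : ∀ i ∈ s, f (single i 1) = g (single i 1)) :
    Set.EqOn f g (supported R R s) := by
  rw [supported_eq_span_single]
  exact LinearMap.eqOn_span (Set.forall_mem_image.2 h)

variable {L : Type*} [PartialOrder L]

variable (R) in
/-- The span of the basis elements with label `≤ z`: the value at `z` of the free functor on `L`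
with generators in the degrees given by `l`. -/
abbrev labelLE (l : ι → L) (z : L) : Submodule R (ι →₀ R) := supported R R (l ⁻¹' Set.Iic z)

lemma labelLE_eq_sup (l : ι → L) (z : L) :
    labelLE R l z = supported R R (l ⁻¹' Set.Iio z) ⊔ supported R R (l ⁻¹' {z}) := by
  rw [← supported_union, ← Set.preimage_union, Set.Iio_union_right]

/-- A linear map between free modules with labelled bases which does not increase labels, that is,
a morphism of the corresponding free functors on `L`. -/
def IsLabelled (l : ι → L) (l' : κ → L) (f : (ι →₀ R) →ₗ[R] (κ →₀ R)) : Prop :=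
  ∀ i, f (single i 1) ∈ labelLE R l' (l i)

variable {l : ι → L} {l' : κ → L} {l'' : μ → L}

lemma IsLabelled.supported_le_comap {f : (ι →₀ R) →ₗ[R] (κ →₀ R)} (hf : IsLabelled l l' f)
    {s : Set L} (hs : IsLowerSet s) :
    supported R R (l ⁻¹' s) ≤ (supported R R (l' ⁻¹' s)).comap f :=
  supported_le_comap_iff.2 fun i hi =>
    supported_mono (Set.preimage_mono fun _ h => hs h hi) (hf i)

lemma IsLabelled.comp {g : (κ →₀ R) →ₗ[R] (μ →₀ R)} {f : (ι →₀ R) →ₗ[R] (κ →₀ R)}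
    (hg : IsLabelled l' l'' g) (hf : IsLabelled l l' f) : IsLabelled l l'' (g ∘ₗ f) :=
  fun i => hg.supported_le_comap (isLowerSet_Iic (l i)) (hf i)

lemma isLabelled_id : IsLabelled l l (LinearMap.id : (ι →₀ R) →ₗ[R] (ι →₀ R)) :=
  fun i => single_mem_supported R 1 (le_refl (l i))

lemma IsLabelled.sub {f g : (ι →₀ R) →ₗ[R] (κ →₀ R)} (hf : IsLabelled l l' f)
    (hg : IsLabelled l l' g) : IsLabelled l l' (f - g) :=
  fun i => sub_mem (hf i) (hg i)

lemma disjoint_preimage_Iio (l : ι → L) (m : L) : Disjoint (l ⁻¹' {m}) (l ⁻¹' Set.Iio m) :=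
  Disjoint.preimage l (Set.disjoint_singleton_left.2 (lt_irrefl m))

lemma IsLabelled.strandMap_subtypeDomain {g : (κ →₀ R) →ₗ[R] (μ →₀ R)}
    (hg : IsLabelled l' l'' g) {m : L} {x : κ →₀ R} (hx : x ∈ labelLE R l' m) :
    strandMap l' l'' m g (subtypeDomain (· ∈ l' ⁻¹' {m}) x) =
      subtypeDomain (· ∈ l'' ⁻¹' {m}) (g x) := by
  refine eqOn_supported
    (f := strandMap l' l'' m g ∘ₗ lsubtypeDomain (R := R) (M := R) (l' ⁻¹' {m}))
    (g := lsubtypeDomain (R := R) (M := R) (l'' ⁻¹' {m}) ∘ₗ g) (fun i hi => ?_) hx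
  simp only [LinearMap.comp_apply, lsubtypeDomain_apply]
  obtain hlt | heq := (show l' i ≤ m from hi).lt_or_eq
  · have hgi : g (single i 1) ∈ supported R R (l'' ⁻¹' Set.Iio m) :=
      hg.supported_le_comap (isLowerSet_Iio m) (single_mem_supported R 1 hlt)
    rw [subtypeDomain_eq_zero (disjoint_preimage_Iio l' m) (single_mem_supported R 1 hlt),
      subtypeDomain_eq_zero (disjoint_preimage_Iio l'' m) hgi, map_zero]
  · rw [subtypeDomain_single (⟨i, heq⟩ : l' ⁻¹' {m}), strandMap_single]

lemma strandMap_comp {g : (κ →₀ R) →ₗ[R] (μ →₀ R)} {f : (ι →₀ R) →ₗ[R] (κ →₀ R)}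
    (hg : IsLabelled l' l'' g) (hf : IsLabelled l l' f) (m : L) :
    strandMap l l'' m (g ∘ₗ f) = strandMap l' l'' m g ∘ₗ strandMap l l' m f := by
  ext i : 2
  obtain ⟨i, rfl⟩ := i
  simp [strandMap_single, hg.strandMap_subtypeDomain (hf i)]

end Labels

section Contraction

variable {R : Type*} [CommRing R] {L : Type*} [PartialOrder L]

lemma exists_isLabelled_comp_eq {ι κ M : Type*} [AddCommGroup M] [Module R M] {l : ι → L}
    {l' : κ → L} {d : (κ →₀ R) →ₗ[R] M} {g : (ι →₀ R) →ₗ[R] M}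
    (h : ∀ i, g (single i 1) ∈ (labelLE R l' (l i)).map d) :
    ∃ f, IsLabelled l l' f ∧ d ∘ₗ f = g := by
  choose v hv hdv using h
  refine ⟨linearCombination R v, fun i => ?_, ?_⟩
  · simpa using hv i
  · ext i
    simp [hdv]

variable {ι : ℕ → Type*} {l : ∀ n, ι n → L} {d : ∀ n, (ι (n + 1) →₀ R) →ₗ[R] (ι n →₀ R)}

/-- A complex of free functors on `L`, given by free modules with labelled bases, which is exact at
all the labels that occur in it. -/
structure IsLabelledExact (l : ∀ n, ι n → L) (d : ∀ n, (ι (n + 1) →₀ R) →ₗ[R] (ι n →₀ R)) :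
    Prop where
  isLabelled : ∀ n, IsLabelled (l (n + 1)) (l n) (d n)
  d_d : ∀ n x, d n (d (n + 1) x) = 0
  exact : ∀ n i, labelLE R (l n) (l n i) ⊓ cycles (M := fun n => ι n →₀ R) d n ≤
    (labelLE R (l (n + 1)) (l n i)).map (d n)

namespace IsLabelledExact

lemma exists_homotopy_zero (hd : IsLabelledExact l d) :
    ∃ h, IsLabelled (l 0) (l 1) h ∧ d 0 ∘ₗ h = .id :=
  exists_isLabelled_comp_eq fun i => hd.exact 0 i ⟨isLabelled_id i, trivial⟩

lemma exists_homotopy_of_rightInverse (hd : IsLabelledExact l d) {n : ℕ}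
    {h : (ι n →₀ R) →ₗ[R] (ι (n + 1) →₀ R)} (hh : IsLabelled (l n) (l (n + 1)) h)
    (hdh : ∀ x ∈ cycles (M := fun n => ι n →₀ R) d n, d n (h x) = x) :
    ∃ h', IsLabelled (l (n + 1)) (l (n + 2)) h' ∧ d (n + 1) ∘ₗ h' + h ∘ₗ d n = .id := by
  obtain ⟨h', hh', hdh'⟩ : ∃ h', IsLabelled (l (n + 1)) (l (n + 2)) h' ∧
      d (n + 1) ∘ₗ h' = .id - h ∘ₗ d n := by
    refine exists_isLabelled_comp_eq fun i => hd.exact (n + 1) i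
      ⟨(isLabelled_id.sub (hh.comp (hd.isLabelled n))) i, LinearMap.mem_ker.2 ?_⟩
    simp [hdh _ (map_mem_cycles (M := fun n => ι n →₀ R) hd.d_d n _)]
  refine ⟨h', hh', ?_⟩
  rw [hdh']
  exact LinearMap.ext fun x => sub_add_cancel x (h (d n x))

lemma exists_rightInverse (hd : IsLabelledExact l d) (n : ℕ) :
    ∃ h, IsLabelled (l n) (l (n + 1)) h ∧
      ∀ x ∈ cycles (M := fun n => ι n →₀ R) d n, d n (h x) = x := by
  induction n with
  | zero =>
    obtain ⟨h, hh, hdh⟩ := hd.exists_homotopy_zero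
    exact ⟨h, hh, fun x _ => LinearMap.congr_fun hdh x⟩
  | succ n ih =>
    obtain ⟨h, hh, hdh⟩ := ih
    obtain ⟨h', hh', hhom⟩ := hd.exists_homotopy_of_rightInverse hh hdh
    refine ⟨h', hh', fun x hx => ?_⟩
    simpa [show d n x = 0 from hx] using LinearMap.congr_fun hhom x

lemma exists_homotopy_succ (hd : IsLabelledExact l d) (n : ℕ) :
    ∃ h h', IsLabelled (l n) (l (n + 1)) h ∧ IsLabelled (l (n + 1)) (l (n + 2)) h' ∧
      d (n + 1) ∘ₗ h' + h ∘ₗ d n = .id := by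
  obtain ⟨h, hh, hdh⟩ := hd.exists_rightInverse n
  obtain ⟨h', hh', hhom⟩ := hd.exists_homotopy_of_rightInverse hh hdh
  exact ⟨h, h', hh, hh', hhom⟩

end IsLabelledExact

end Contraction

section Tensor

variable {R : Type*} [CommRing R] {ι ι' ι'' κ κ' κ'' : Type*}

/-- The external product of finitely supported functions: the tensor product
`(ι →₀ R) ⊗ (κ →₀ R)`, identified with `ι × κ →₀ R`. -/
def tens : (ι →₀ R) →ₗ[R] (κ →₀ R) →ₗ[R] (ι × κ →₀ R) :=
  (TensorProduct.mk R _ _).compr₂ (finsuppTensorFinsupp' R ι κ).toLinearMap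

lemma tens_single_single (i : ι) (j : κ) (a b : R) :
    tens (single i a) (single j b) = single (i, j) (a * b) :=
  finsuppTensorFinsupp'_single_tmul_single R ι κ i j a b

lemma tens_hom_ext {M : Type*} [AddCommGroup M] [Module R M] {f g : (ι × κ →₀ R) →ₗ[R] M}
    (h : ∀ u v, f (tens u v) = g (tens u v)) : f = g := by
  ext ⟨i, j⟩
  simpa [tens_single_single] using h (single i 1) (single j 1)

/-- The map `⨁ j, f j` on `ι × κ →₀ R`, regarded as a sum of copies of `ι →₀ R`. -/
def blockMap (f : κ → (ι →₀ R) →ₗ[R] (ι' →₀ R)) : (ι × κ →₀ R) →ₗ[R] (ι' × κ →₀ R) :=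
  linearCombination R fun p => tens (f p.2 (single p.1 1)) (single p.2 1)

/-- The map `f ⊗ id` on external products. -/
abbrev leftMap (f : (ι →₀ R) →ₗ[R] (ι' →₀ R)) : (ι × κ →₀ R) →ₗ[R] (ι' × κ →₀ R) :=
  blockMap fun _ => f

/-- The map `id ⊗ g` on external products. -/
def rightMap (g : (κ →₀ R) →ₗ[R] (κ' →₀ R)) : (ι × κ →₀ R) →ₗ[R] (ι × κ' →₀ R) :=
  linearCombination R fun p => tens (single p.1 1) (g (single p.2 1))

lemma blockMap_tens_single (f : κ → (ι →₀ R) →ₗ[R] (ι' →₀ R)) (u : ι →₀ R) (j : κ) :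
    blockMap f (tens u (single j 1)) = tens (f j u) (single j 1) := by
  suffices blockMap f ∘ₗ tens.flip (single j 1) = tens.flip (single j 1) ∘ₗ f j from
    LinearMap.congr_fun this u
  ext i : 2
  simp [tens_single_single, blockMap]

lemma leftMap_tens (f : (ι →₀ R) →ₗ[R] (ι' →₀ R)) (u : ι →₀ R) (v : κ →₀ R) :
    leftMap f (tens u v) = tens (f u) v := by
  suffices leftMap f ∘ₗ tens u = tens (f u) from LinearMap.congr_fun this v
  ext j : 2
  simp [blockMap_tens_single]

lemma rightMap_tens (g : (κ →₀ R) →ₗ[R] (κ' →₀ R)) (u : ι →₀ R) (v : κ →₀ R) :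
    rightMap g (tens u v) = tens u (g v) := by
  suffices tens.compr₂ (rightMap g) = tens.compl₂ g from LinearMap.congr_fun₂ this u v
  ext i j : 4
  simp [tens_single_single, rightMap]

lemma swap_tens (u : ι →₀ R) (v : κ →₀ R) :
    lmapDomain R R Prod.swap (tens u v) = tens v u := by
  suffices tens.compr₂ (lmapDomain R R Prod.swap) = tens.flip from LinearMap.congr_fun₂ this u v
  ext i j : 4
  simp [tens_single_single]

lemma fst_tens_single (u : ι →₀ R) (j : κ) :
    lmapDomain R R Prod.fst (tens u (single j 1)) = u := by
  suffices lmapDomain R R Prod.fst ∘ₗ tens.flip (single j 1) = .id from LinearMap.congr_fun this u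
  ext i : 2
  simp [tens_single_single]

lemma fst_comp_leftMap (f : (ι →₀ R) →ₗ[R] (ι' →₀ R)) :
    lmapDomain R R Prod.fst ∘ₗ leftMap (κ := κ) f = f ∘ₗ lmapDomain R R Prod.fst := by
  ext ⟨i, j⟩ : 2
  simpa [blockMap] using fst_tens_single (f (single i 1)) j

lemma blockMap_comp (f : κ → (ι' →₀ R) →ₗ[R] (ι'' →₀ R)) (g : κ → (ι →₀ R) →ₗ[R] (ι' →₀ R)) :
    blockMap f ∘ₗ blockMap g = blockMap fun j => f j ∘ₗ g j := by
  ext ⟨i, j⟩ : 2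
  simpa [blockMap] using blockMap_tens_single f (g j (single i 1)) j

lemma blockMap_add (f g : κ → (ι →₀ R) →ₗ[R] (ι' →₀ R)) :
    blockMap f + blockMap g = blockMap fun j => f j + g j := by
  ext ⟨i, j⟩ : 2
  simp [blockMap]

lemma blockMap_zero : blockMap (fun _ : κ => (0 : (ι →₀ R) →ₗ[R] (ι' →₀ R))) = 0 :=
  tens_hom_ext fun u v => by simp [leftMap_tens]

lemma blockMap_id : blockMap (fun _ : κ => (.id : (ι →₀ R) →ₗ[R] (ι →₀ R))) = .id :=
  tens_hom_ext fun u v => leftMap_tens _ u v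

lemma leftMap_comp_rightMap (f : (ι →₀ R) →ₗ[R] (ι' →₀ R)) (g : (κ →₀ R) →ₗ[R] (κ' →₀ R)) :
    leftMap f ∘ₗ rightMap g = rightMap g ∘ₗ leftMap f :=
  tens_hom_ext fun u v => by simp [leftMap_tens, rightMap_tens]

lemma rightMap_comp_rightMap (g : (κ' →₀ R) →ₗ[R] (κ'' →₀ R)) (f : (κ →₀ R) →ₗ[R] (κ' →₀ R)) :
    rightMap (ι := ι) g ∘ₗ rightMap f = rightMap (g ∘ₗ f) :=
  tens_hom_ext fun u v => by simp [rightMap_tens]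

lemma rightMap_zero : rightMap (ι := ι) (0 : (κ →₀ R) →ₗ[R] (κ' →₀ R)) = 0 :=
  tens_hom_ext fun u v => by simp [rightMap_tens]

lemma swap_comp_rightMap (g : (κ →₀ R) →ₗ[R] (κ' →₀ R)) :
    lmapDomain R R Prod.swap ∘ₗ rightMap (ι := ι) g = leftMap g ∘ₗ lmapDomain R R Prod.swap :=
  tens_hom_ext fun u v => by
    simp only [LinearMap.comp_apply, rightMap_tens, leftMap_tens, swap_tens]

variable {L : Type*} [SemilatticeSup L]

/-- The labels of the external product of two free modules with labelled bases. -/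
def joinLabel (l : ι → L) (l' : κ → L) (p : ι × κ) : L := l p.1 ⊔ l' p.2

variable {l : ι → L} {l' : ι' → L} {k : κ → L} {k' : κ' → L}

lemma IsLabelled.sup_const {f : (ι →₀ R) →ₗ[R] (ι' →₀ R)} (hf : IsLabelled l l' f) (z : L) :
    IsLabelled (fun i => l i ⊔ z) (fun i => l' i ⊔ z) f :=
  fun i => supported_mono (fun _ h => sup_le_sup_right h z) (hf i)

lemma labelLE_sup_const (l : ι → L) {y z : L} (h : y ≤ z) :
    labelLE R (fun i => l i ⊔ y) z = labelLE R l z := by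
  simp [labelLE, Set.preimage, h]

lemma isLabelled_blockMap {f : κ → (ι →₀ R) →ₗ[R] (ι' →₀ R)}
    (hf : ∀ j, IsLabelled (fun i => l i ⊔ k j) (fun i => l' i ⊔ k j) (f j)) :
    IsLabelled (joinLabel l k) (joinLabel l' k) (blockMap f) := by
  rintro ⟨i, j⟩
  have hmem : labelLE R (fun i => l' i ⊔ k j) (l i ⊔ k j) ≤
      (labelLE R (joinLabel l' k) (l i ⊔ k j)).comap (tens.flip (single j 1)) :=
    supported_le_comap_iff.2 fun i' hi' => by
      rw [LinearMap.flip_apply, tens_single_single]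
      exact single_mem_supported R _ hi'
  simpa [blockMap, joinLabel] using hmem (hf j i)

lemma isLabelled_leftMap {f : (ι →₀ R) →ₗ[R] (ι' →₀ R)} (hf : IsLabelled l l' f) :
    IsLabelled (joinLabel l k) (joinLabel l' k) (leftMap f) :=
  isLabelled_blockMap fun j => hf.sup_const (k j)

lemma isLabelled_rightMap {g : (κ →₀ R) →ₗ[R] (κ' →₀ R)} (hg : IsLabelled k k' g) :
    IsLabelled (joinLabel l k) (joinLabel l k') (rightMap g) := by
  rintro ⟨i, j⟩
  have hmem : labelLE R k' (k j) ≤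
      (labelLE R (joinLabel l k') (l i ⊔ k j)).comap (tens (single i 1)) :=
    supported_le_comap_iff.2 fun j' hj' => by
      rw [tens_single_single]
      exact single_mem_supported R _ (sup_le_sup_left (show k' j' ≤ k j from hj') (l i))
  simpa [rightMap, joinLabel] using hmem (hg j)

end Tensor

universe u v w

/-- A free resolution, with coefficients in `R`, of the simple functor supported at the bottom of
the join-semilattice `L`, the free functors being given by free modules with labelled bases. -/
structure LabelledResolution (R : Type u) [CommRing R] (L : Type v) [SemilatticeSup L]
    [OrderBot L] where
  ι : ℕ → Type w
  label : ∀ n, ι n → L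
  d : ∀ n, (ι (n + 1) →₀ R) →ₗ[R] (ι n →₀ R)
  isLabelled_d : ∀ n, IsLabelled (label (n + 1)) (label n) (d n)
  d_d : ∀ n x, d n (d (n + 1) x) = 0
  unique : Unique (ι 0)
  label_zero : ∀ i, label 0 i = ⊥
  bot_lt_label : ∀ n i, ⊥ < label (n + 1) i
  exact : ∀ z, ⊥ < z → ∀ n, labelLE R (label n) z ⊓ cycles (M := fun n => ι n →₀ R) d n ≤
    (labelLE R (label (n + 1)) z).map (d n)

namespace LabelledResolution

variable {R : Type*} [CommRing R] {L : Type*} [SemilatticeSup L] [OrderBot L]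

attribute [instance] unique

/-- The strand of `X` at `m` has no homology in degree `n`: equivalently,
`Tor n` of the resolved functor with the simple functor at `m` vanishes. -/
def IsAcyclicAt (X : LabelledResolution R L) (m : L) (n : ℕ) : Prop :=
  IsExactAt (M := fun n => Strand R (X.label n) m)
    (fun n => strandMap (X.label (n + 1)) (X.label n) m (X.d n)) n

/-- The `(p, q)` entry of the double complex obtained from the strands at `m` of `X ⊗ Y`. -/
abbrev TensorStrand (X Y : LabelledResolution R L) (m : L) (p q : ℕ) : Type _ :=
  Strand R (joinLabel (X.label p) (Y.label q)) m

variable (X Y : LabelledResolution R L) (m : L)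

/-- The differential of `X ⊗ Y` in the first variable, at `m`. -/
def rowMap (q p : ℕ) : X.TensorStrand Y m (p + 1) q →ₗ[R] X.TensorStrand Y m p q :=
  strandMap _ _ m (leftMap (X.d p))

/-- The differential of `X ⊗ Y` in the second variable, at `m`, without sign. -/
def colMap (p q : ℕ) : X.TensorStrand Y m p (q + 1) →ₗ[R] X.TensorStrand Y m p q :=
  strandMap _ _ m (rightMap (Y.d q))

lemma d_comp_d (n : ℕ) : X.d n ∘ₗ X.d (n + 1) = 0 := LinearMap.ext (X.d_d n)

lemma isLabelledExact_sup {z : L} (hz : ⊥ < z) :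
    IsLabelledExact (fun n i => X.label n i ⊔ z) X.d where
  isLabelled n := (X.isLabelled_d n).sup_const z
  d_d := X.d_d
  exact n i := by
    rw [labelLE_sup_const _ le_sup_right, labelLE_sup_const _ le_sup_right]
    exact X.exact _ (hz.trans_le le_sup_right) n

lemma isExactAt_rowMap_of_bot_lt {q : ℕ} (hq : ∀ j, ⊥ < Y.label q j) (p : ℕ) :
    IsExactAt (M := fun p => X.TensorStrand Y m p q) (X.rowMap Y m q) p := by
  have hX := fun j => X.isLabelledExact_sup (hq j)
  have hd := fun p => isLabelled_leftMap (k := Y.label q) (X.isLabelled_d p)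
  cases p with
  | zero =>
    choose h hh hdh using fun j => (hX j).exists_homotopy_zero
    refine fun x _ => ⟨strandMap _ _ m (blockMap h) x, ?_⟩
    rw [rowMap, ← LinearMap.comp_apply, ← strandMap_comp (hd 0) (isLabelled_blockMap hh),
      blockMap_comp, funext hdh, blockMap_id, strandMap_id, LinearMap.id_apply]
  | succ p =>
    choose h h' hh hh' hhom using fun j => (hX j).exists_homotopy_succ p
    have hrow : X.rowMap Y m q (p + 1) ∘ₗ strandMap _ _ m (blockMap h') +
        strandMap _ _ m (blockMap h) ∘ₗ X.rowMap Y m q p = .id := by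
      rw [rowMap, rowMap, ← strandMap_comp (hd (p + 1)) (isLabelled_blockMap hh'),
        ← strandMap_comp (isLabelled_blockMap hh) (hd p), ← strandMap_add, blockMap_comp,
        blockMap_comp, blockMap_add, funext hhom, blockMap_id, strandMap_id]
    intro x (hx : X.rowMap Y m q p x = 0)
    exact ⟨strandMap _ _ m (blockMap h') x, by simpa [hx] using LinearMap.congr_fun hrow x⟩

lemma isExactAt_colMap_iff (p q : ℕ) : IsExactAt (X.colMap Y m p) q ↔
    IsExactAt (M := fun q => Y.TensorStrand X m q p) (Y.rowMap X m p) q :=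
  isExactAt_strandMap_congr (fun q => Equiv.prodComm (X.ι p) (Y.ι q))
    (fun _ _ => sup_comm _ _) (fun q => swap_comp_rightMap (Y.d q)) m q

lemma isExactAt_rowMap_zero_iff (p : ℕ) :
    IsExactAt (M := fun p => X.TensorStrand Y m p 0) (X.rowMap Y m 0) p ↔ X.IsAcyclicAt m p :=
  isExactAt_strandMap_congr (fun p => Equiv.prodUnique (X.ι p) (Y.ι 0))
    (fun p i => by simp [joinLabel, Y.label_zero])
    (fun p => fst_comp_leftMap (X.d p)) m p

lemma isExactOffAxes : IsExactOffAxes (X.rowMap Y m) (X.colMap Y m) where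
  comm p q x := by
    simp only [rowMap, colMap, ← LinearMap.comp_apply]
    rw [← strandMap_comp (isLabelled_leftMap (X.isLabelled_d p))
      (isLabelled_rightMap (Y.isLabelled_d q)),
      ← strandMap_comp (isLabelled_rightMap (Y.isLabelled_d q))
      (isLabelled_leftMap (X.isLabelled_d p)), leftMap_comp_rightMap]
  dh_dh q p x := by
    rw [rowMap, rowMap, ← LinearMap.comp_apply,
      ← strandMap_comp (isLabelled_leftMap (X.isLabelled_d p))
      (isLabelled_leftMap (X.isLabelled_d (p + 1))), blockMap_comp,
      X.d_comp_d, blockMap_zero, strandMap_zero, LinearMap.zero_apply]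
  dv_dv p q x := by
    rw [colMap, colMap, ← LinearMap.comp_apply,
      ← strandMap_comp (isLabelled_rightMap (Y.isLabelled_d q))
      (isLabelled_rightMap (Y.isLabelled_d (q + 1))), rightMap_comp_rightMap,
      Y.d_comp_d, rightMap_zero, strandMap_zero, LinearMap.zero_apply]
  row_exact q := X.isExactAt_rowMap_of_bot_lt Y m (Y.bot_lt_label q)
  col_exact p q := (X.isExactAt_colMap_iff Y m (p + 1) q).2
    (Y.isExactAt_rowMap_of_bot_lt X m (X.bot_lt_label p) q)

lemma isExactAt_colMap_zero_iff (q : ℕ) : IsExactAt (X.colMap Y m 0) q ↔ Y.IsAcyclicAt m q :=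
  (X.isExactAt_colMap_iff Y m 0 q).trans (Y.isExactAt_rowMap_zero_iff X m q)

variable {m} in
lemma isAcyclicAt_zero_iff [Nontrivial R] : X.IsAcyclicAt m 0 ↔ m ≠ ⊥ := by
  constructor
  · rintro h rfl
    have : IsEmpty (X.label 1 ⁻¹' {⊥}) := ⟨fun i => (X.bot_lt_label 0 i).ne' i.2⟩
    obtain ⟨x, hx⟩ := h (x := single ⟨default, X.label_zero _⟩ 1) trivial
    rw [Subsingleton.elim x 0, map_zero, eq_comm, single_eq_zero] at hx
    exact one_ne_zero hx
  · intro hm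
    have : IsEmpty (X.label 0 ⁻¹' {m}) := ⟨fun i => hm (i.2.symm.trans (X.label_zero i))⟩
    exact fun x _ => ⟨0, Subsingleton.elim _ _⟩

variable {m} in
lemma ne_bot_of_not_isAcyclicAt_succ {n : ℕ} (h : ¬ X.IsAcyclicAt m (n + 1)) : m ≠ ⊥ := by
  rintro rfl
  have : IsEmpty (X.label (n + 1) ⁻¹' {⊥}) := ⟨fun i => (X.bot_lt_label n i).ne' i.2⟩
  exact h fun x _ => ⟨0, Subsingleton.elim _ _⟩

variable {X} {m} in
lemma IsAcyclicAt.of_resolution {n : ℕ} (h : X.IsAcyclicAt m n) : Y.IsAcyclicAt m n :=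
  (X.isExactAt_colMap_zero_iff Y m n).1 <|
    (X.isExactOffAxes Y m).isExactAt_of_row_zero ((X.isExactAt_rowMap_zero_iff Y m n).2 h)

variable {m} in
lemma exists_sup_eq_of_not_isAcyclicAt {p q : ℕ} (h : ¬ Y.IsAcyclicAt m (p + q)) :
    ∃ i j, X.label p i ⊔ Y.label q j = m := by
  contrapose! h
  have : IsEmpty (joinLabel (X.label p) (Y.label q) ⁻¹' {m}) := ⟨fun i => h i.1.1 i.1.2 i.2⟩
  exact (X.isExactAt_colMap_zero_iff Y m (p + q)).1
    (X.isExactOffAxes Y m).isExactAt_of_subsingleton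

end LabelledResolution

section ProjectiveCover

variable {𝕜 : Type u} [Field 𝕜] {M : Type w} [AddCommGroup M] [Module 𝕜 M]

lemma exists_disjoint_sup_eq {A B : Submodule 𝕜 M} (h : A ≤ B) :
    ∃ C, Disjoint A C ∧ A ⊔ C = B := by
  obtain ⟨C, hC⟩ := exists_isCompl A
  exact ⟨C ⊓ B, hC.disjoint.mono_right inf_le_left, by
    rw [← sup_inf_assoc_of_le C h, hC.sup_eq_top, top_inf_eq]⟩

variable {L : Type v} {κ : L → Type*} {N : L → Submodule 𝕜 M}

/-- The map from the free module on bases of the subspaces `N z`. -/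
def sigmaLift (b : ∀ z, Module.Basis (κ z) 𝕜 (N z)) : ((Σ z, κ z) →₀ 𝕜) →ₗ[𝕜] M :=
  linearCombination 𝕜 fun i => (b i.1 i.2 : M)

lemma sigmaLift_single (b : ∀ z, Module.Basis (κ z) 𝕜 (N z)) (i : Σ z, κ z) :
    sigmaLift b (single i 1) = b i.1 i.2 := by
  simp [sigmaLift]

lemma sigmaLift_lmapDomain_mk (b : ∀ z, Module.Basis (κ z) 𝕜 (N z)) (z : L) (t : κ z →₀ 𝕜) :
    sigmaLift b (lmapDomain 𝕜 𝕜 (Sigma.mk z) t) = (b z).repr.symm t := by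
  suffices sigmaLift b ∘ₗ lmapDomain 𝕜 𝕜 (Sigma.mk z) = (N z).subtype ∘ₗ (b z).repr.symm from
    LinearMap.congr_fun this t
  ext i
  simp [sigmaLift_single]

lemma supported_fst_preimage_singleton (z : L) :
    supported 𝕜 𝕜 (Sigma.fst ⁻¹' {z}) =
      LinearMap.range (lmapDomain 𝕜 𝕜 (Sigma.mk (β := κ) z)) := by
  rw [← Set.range_sigmaMk, ← Set.image_univ, ← lmapDomain_supported, supported_univ,
    Submodule.map_top]

variable [PartialOrder L]

/-- A projective cover, by a free functor, of the functor on `L` given by a monotone family of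
subspaces of `M`: the kernel at `z` involves only generators in degrees `< z`. -/
structure ProjectiveCover (Z : L → Submodule 𝕜 M) where
  ι : Type (max v w)
  label : ι → L
  d : (ι →₀ 𝕜) →ₗ[𝕜] M
  map_d : ∀ z, (labelLE 𝕜 label z).map d = Z z
  ker_le : ∀ z, labelLE 𝕜 label z ⊓ LinearMap.ker d ≤ supported 𝕜 𝕜 (label ⁻¹' Set.Iio z)

lemma labelLE_inf_ker_sigmaLift_le {Z : L → Submodule 𝕜 M}
    (hN : ∀ z, (⨆ y < z, Z y) ⊔ N z = Z z) (hdisj : ∀ z, Disjoint (⨆ y < z, Z y) (N z))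
    (b : ∀ z, Module.Basis (κ z) 𝕜 (N z)) (z : L) :
    labelLE 𝕜 Sigma.fst z ⊓ LinearMap.ker (sigmaLift b) ≤
      supported 𝕜 𝕜 (Sigma.fst ⁻¹' Set.Iio z) := by
  rintro x ⟨hx, hdx⟩
  rw [labelLE_eq_sup, supported_fst_preimage_singleton] at hx
  obtain ⟨u, hu, -, ⟨t, rfl⟩, rfl⟩ := Submodule.mem_sup.1 hx
  have hdu : supported 𝕜 𝕜 (Sigma.fst ⁻¹' Set.Iio z) ≤ (⨆ y < z, Z y).comap (sigmaLift b) :=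
    supported_le_comap_iff.2 fun i hi => by
      rw [sigmaLift_single]
      exact le_iSup₂ (f := fun y (_ : y < z) => Z y) i.1 hi
        (hN i.1 ▸ Submodule.mem_sup_right (b i.1 i.2).2)
  have hdt : sigmaLift b u + (b z).repr.symm t = 0 := by
    rwa [← sigmaLift_lmapDomain_mk, ← map_add]
  have ht : (b z).repr.symm t = 0 := Subtype.ext <| (Submodule.disjoint_def.1 (hdisj z)) _
    (eq_neg_of_add_eq_zero_right hdt ▸ neg_mem (hdu hu)) ((b z).repr.symm t).2
  rw [(LinearEquiv.map_eq_zero_iff _).1 ht, map_zero, add_zero]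
  exact hu

variable [WellFoundedLT L]

lemma map_sigmaLift_labelLE {Z : L → Submodule 𝕜 M} (hZ : Monotone Z)
    (hN : ∀ z, (⨆ y < z, Z y) ⊔ N z = Z z) (b : ∀ z, Module.Basis (κ z) 𝕜 (N z)) (z : L) :
    (labelLE 𝕜 Sigma.fst z).map (sigmaLift b) = Z z := by
  refine le_antisymm (Submodule.map_le_iff_le_comap.2 (supported_le_comap_iff.2 fun i hi => ?_)) ?_
  · rw [sigmaLift_single]
    exact hZ hi (hN i.1 ▸ Submodule.mem_sup_right (b i.1 i.2).2)
  · induction z using WellFoundedLT.induction with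
    | ind z ih =>
      rw [← hN z]
      refine sup_le (iSup₂_le fun y hy => (ih y hy).trans ?_) fun x hx => ?_
      · exact Submodule.map_mono (supported_mono fun i hi => le_trans hi hy.le)
      · refine ⟨lmapDomain 𝕜 𝕜 (Sigma.mk z) ((b z).repr ⟨x, hx⟩), ?_, ?_⟩
        · rw [labelLE_eq_sup, supported_fst_preimage_singleton]
          exact Submodule.mem_sup_right (LinearMap.mem_range_self _ _)
        · rw [sigmaLift_lmapDomain_mk, LinearEquiv.symm_apply_apply]

theorem nonempty_projectiveCover {Z : L → Submodule 𝕜 M} (hZ : Monotone Z) :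
    Nonempty (ProjectiveCover Z) := by
  choose N hdisj hN using fun z => exists_disjoint_sup_eq (iSup₂_le fun y (hy : y < z) => hZ hy.le)
  let b z := Module.Basis.ofVectorSpace 𝕜 (N z)
  exact ⟨_, Sigma.fst, sigmaLift b, map_sigmaLift_labelLE hZ hN b,
    labelLE_inf_ker_sigmaLift_le hN hdisj b⟩

end ProjectiveCover

section MinimalResolution

variable {𝕜 : Type u} [Field 𝕜] {L : Type v} [SemilatticeSup L] [OrderBot L]

/-- A resolution is minimal if its differential strictly decreases labels. -/
def LabelledResolution.IsMinimal (X : LabelledResolution 𝕜 L) : Prop :=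
  ∀ n i, X.d n (single i 1) ∈ supported 𝕜 𝕜 (X.label n ⁻¹' Set.Iio (X.label (n + 1) i))

lemma LabelledResolution.IsMinimal.strandMap_d_eq_zero {X : LabelledResolution 𝕜 L}
    (hX : X.IsMinimal) (n : ℕ) (m : L) :
    strandMap (X.label (n + 1)) (X.label n) m (X.d n) = 0 := by
  ext i : 2
  obtain ⟨i, rfl⟩ := i
  rw [LinearMap.comp_apply, lsingle_apply, strandMap_single,
    subtypeDomain_eq_zero (disjoint_preimage_Iio _ _) (hX n i)]
  rfl

lemma LabelledResolution.IsMinimal.not_isAcyclicAt_label {X : LabelledResolution 𝕜 L}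
    (hX : X.IsMinimal) (n : ℕ) (i : X.ι n) : ¬ X.IsAcyclicAt (X.label n i) n := by
  intro h
  let b : Strand 𝕜 (X.label n) (X.label n i) := single ⟨i, rfl⟩ 1
  have hb : b ∈ cycles (M := fun k => Strand 𝕜 (X.label k) (X.label n i)) (fun k =>
      strandMap (X.label (k + 1)) (X.label k) (X.label n i) (X.d k)) n := by
    cases n with
    | zero => trivial
    | succ n => exact LinearMap.congr_fun (hX.strandMap_d_eq_zero n _) b
  obtain ⟨x, hx⟩ := h hb
  have hb0 : b = 0 := hx.symm.trans (LinearMap.congr_fun (hX.strandMap_d_eq_zero n _) x)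
  exact one_ne_zero (single_eq_zero.1 hb0)

variable (𝕜 L) in
/-- One term of a resolution: a free module with labelled basis, and the cycles in it. -/
structure ResolutionStage where
  ι : Type (max u v)
  label : ι → L
  cyc : Submodule 𝕜 (ι →₀ 𝕜)

namespace ResolutionStage

/-- The functor of cycles, set to zero at `⊥`. -/
def cycLE (s : ResolutionStage 𝕜 L) (z : L) : Submodule 𝕜 (s.ι →₀ 𝕜) :=
  ⨆ _ : ⊥ < z, labelLE 𝕜 s.label z ⊓ s.cyc

lemma cycLE_of_bot_lt (s : ResolutionStage 𝕜 L) {z : L} (hz : ⊥ < z) :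
    s.cycLE z = labelLE 𝕜 s.label z ⊓ s.cyc :=
  iSup_pos hz

lemma monotone_cycLE (s : ResolutionStage 𝕜 L) : Monotone s.cycLE := fun _ _ h =>
  iSup_mono' fun hz => ⟨hz.trans_le h,
    inf_le_inf_right _ (supported_mono fun _ hi => le_trans hi h)⟩

variable [WellFoundedLT L]

/-- A chosen projective cover of the functor of cycles. -/
def cover (s : ResolutionStage 𝕜 L) : ProjectiveCover s.cycLE :=
  (nonempty_projectiveCover s.monotone_cycLE).some

/-- The next term of the resolution. -/
def next (s : ResolutionStage 𝕜 L) : ResolutionStage 𝕜 L :=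
  ⟨s.cover.ι, s.cover.label, LinearMap.ker s.cover.d⟩

lemma cover_d_single_mem (s : ResolutionStage 𝕜 L) (i : s.cover.ι) :
    s.cover.d (single i 1) ∈ s.cycLE (s.cover.label i) :=
  s.cover.map_d _ ▸ Submodule.mem_map_of_mem (single_mem_supported 𝕜 1 (le_refl (s.cover.label i)))

lemma cover_d_mem_cyc (s : ResolutionStage 𝕜 L) (x : s.cover.ι →₀ 𝕜) : s.cover.d x ∈ s.cyc := by
  have h : supported 𝕜 𝕜 Set.univ ≤ s.cyc.comap s.cover.d := supported_le_comap_iff.2 fun i _ =>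
    (iSup_le fun _ => inf_le_right : s.cycLE _ ≤ s.cyc) (s.cover_d_single_mem i)
  exact h (by simp)

lemma bot_lt_cover_label (s : ResolutionStage 𝕜 L) (i : s.cover.ι) : ⊥ < s.cover.label i := by
  rw [bot_lt_iff_ne_bot]
  intro h
  have hd : s.cover.d (single i 1) = 0 := by
    simpa [cycLE, h] using s.cover_d_single_mem i
  have hlt := s.cover.ker_le (s.cover.label i)
    ⟨single_mem_supported 𝕜 1 (le_refl (s.cover.label i)), hd⟩
  simp [h] at hlt

end ResolutionStage

variable [WellFoundedLT L]

variable (𝕜 L) in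
/-- The terms of the minimal resolution. -/
def minimalStage : ℕ → ResolutionStage 𝕜 L
  | 0 => ⟨PUnit, fun _ => ⊥, ⊤⟩
  | n + 1 => (minimalStage n).next

lemma cycLE_minimalStage_le (n : ℕ) (z : L) :
    (minimalStage 𝕜 L n).cycLE z ≤ supported 𝕜 𝕜 ((minimalStage 𝕜 L n).label ⁻¹' Set.Iio z) := by
  refine iSup_le fun hz => ?_
  cases n with
  | zero => exact inf_le_left.trans (supported_mono fun _ _ => hz)
  | succ n => exact (minimalStage 𝕜 L n).cover.ker_le z

variable (𝕜 L) in
theorem exists_isMinimal : ∃ X : LabelledResolution.{u, v, max u v} 𝕜 L, X.IsMinimal := by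
  have cycles_eq (n : ℕ) : cycles (M := fun n => (minimalStage 𝕜 L n).ι →₀ 𝕜)
      (fun n => (minimalStage 𝕜 L n).cover.d) n = (minimalStage 𝕜 L n).cyc := by cases n <;> rfl
  refine ⟨{
    ι n := (minimalStage 𝕜 L n).ι
    label n := (minimalStage 𝕜 L n).label
    d n := (minimalStage 𝕜 L n).cover.d
    isLabelled_d n i := supported_mono (Set.preimage_mono Set.Iio_subset_Iic_self)
      (cycLE_minimalStage_le n _ ((minimalStage 𝕜 L n).cover_d_single_mem i))
    d_d n x := (minimalStage 𝕜 L (n + 1)).cover_d_mem_cyc x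
    unique := inferInstanceAs (Unique PUnit)
    label_zero _ := rfl
    bot_lt_label n := (minimalStage 𝕜 L n).bot_lt_cover_label
    exact z hz n := ?_ }, fun n i => ?_⟩
  · rw [cycles_eq, ← (minimalStage 𝕜 L n).cycLE_of_bot_lt hz]
    exact ((minimalStage 𝕜 L n).cover.map_d z).ge
  · exact cycLE_minimalStage_le n _ ((minimalStage 𝕜 L n).cover_d_single_mem i)

end MinimalResolution

section Chains

variable {K} {P Q : Type} [Preorder P] [Preorder Q]

lemma cbdry_single {n : ℕ} (c : OChain P (n + 1)) :
    cbdry K P n (single c 1) = ∑ k : Fin (n + 1), (-1 : K) ^ (k : ℕ) • single (odel P k c) 1 := by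
  simp [cbdry]

lemma rHomNontrivial_iff (n : ℕ) : RHomNontrivial K P n ↔ ¬ IsExactAt (cbdry K P) n := by
  cases n <;> rfl

instance : Unique (OChain P 0) where
  default := ⟨fun i => i.elim0, fun i => i.elim0⟩
  uniq _ := Subtype.ext (funext fun i => i.elim0)

instance [Finite P] (n : ℕ) : Finite (OChain P n) :=
  inferInstanceAs (Finite {c : Fin n → P // StrictAnti c})

/-- The image of a chain under an order embedding. -/
def mapChain (f : P ↪o Q) {n : ℕ} (c : OChain P n) : OChain Q n :=
  ⟨f ∘ c.1, f.strictMono.comp_strictAnti c.2⟩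

lemma mapChain_injective (f : P ↪o Q) (n : ℕ) : Function.Injective (mapChain f (n := n)) :=
  fun _ _ h => Subtype.ext (f.injective.comp_left (congrArg Subtype.val h))

/-- The chain map induced by an order embedding. -/
def chainMap (f : P ↪o Q) (n : ℕ) : CGrp K P n →ₗ[K] CGrp K Q n := lmapDomain K K (mapChain f)

lemma chainMap_single (f : P ↪o Q) {n : ℕ} (c : OChain P n) (a : K) :
    chainMap f n (single c a) = single (mapChain f c) a :=
  mapDomain_single

lemma chainMap_injective (f : P ↪o Q) (n : ℕ) : Function.Injective (chainMap (K := K) f n) :=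
  mapDomain_injective (mapChain_injective f n)

lemma odel_mapChain (f : P ↪o Q) {n : ℕ} (k : Fin (n + 1)) (c : OChain P (n + 1)) :
    odel Q k (mapChain f c) = mapChain f (odel P k c) := rfl

lemma cbdry_chainMap (f : P ↪o Q) {n : ℕ} (u : CGrp K P (n + 1)) :
    cbdry K Q n (chainMap f (n + 1) u) = chainMap f n (cbdry K P n u) := by
  suffices cbdry K Q n ∘ₗ chainMap f (n + 1) = chainMap f n ∘ₗ cbdry K P n from
    LinearMap.congr_fun this u
  ext c : 2
  simp [chainMap_single, cbdry_single, odel_mapChain]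

lemma rHomNontrivial_congr (e : P ≃o Q) (n : ℕ) : RHomNontrivial K P n ↔ RHomNontrivial K Q n := by
  let σ n : OChain P n ≃ OChain Q n :=
    ⟨mapChain e.toOrderEmbedding, mapChain e.symm.toOrderEmbedding,
      fun c => Subtype.ext (funext fun i => e.symm_apply_apply (c.1 i)),
      fun c => Subtype.ext (funext fun i => e.apply_symm_apply (c.1 i))⟩
  rw [rHomNontrivial_iff, rHomNontrivial_iff]
  refine not_congr (isExactAt_congr (fun n => Finsupp.domLCongr (σ n)) (fun n u => ?_) n)
  simp only [Finsupp.domLCongr_apply, domCongr_apply, equivMapDomain_eq_mapDomain]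
  exact (cbdry_chainMap e.toOrderEmbedding u).symm

/-- The chain obtained by adding a top element `z` to a chain of elements `< z`. -/
def consChain (z : P) {n : ℕ} (c : OChain (Set.Iio z) n) : OChain P (n + 1) :=
  ⟨Fin.cons z (Subtype.val ∘ c.1), by
    intro i j hij
    cases j using Fin.cases with
    | zero => exact absurd hij (Fin.not_lt_zero i)
    | succ j =>
      cases i using Fin.cases with
      | zero => exact (c.1 j).2
      | succ i => exact c.2 (Fin.succ_lt_succ_iff.1 hij)⟩

lemma consChain_injective (z : P) (n : ℕ) : Function.Injective (consChain z (n := n)) :=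
  fun _ _ h => Subtype.ext <| Subtype.val_injective.comp_left <|
    Fin.cons_right_injective (α := fun _ => P) z (congrArg Subtype.val h)

lemma exists_mapChain_eq {z : P} {n : ℕ} {c : OChain P n} (hc : ∀ i, c.1 i < z) :
    ∃ c', mapChain (OrderEmbedding.subtype (· ∈ Set.Iio z)) c' = c :=
  ⟨⟨fun i => ⟨c.1 i, hc i⟩, c.2⟩, rfl⟩

lemma exists_consChain_eq {n : ℕ} (c : OChain P (n + 1)) : ∃ c', consChain (c.1 0) c' = c :=
  ⟨⟨fun i => ⟨c.1 i.succ, c.2 (Fin.succ_pos i)⟩, fun _ _ h => c.2 (Fin.succ_lt_succ_iff.2 h)⟩,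
    Subtype.ext (Fin.cons_self_tail c.1)⟩

lemma odel_zero_consChain {z : P} {n : ℕ} (c : OChain (Set.Iio z) n) :
    odel P 0 (consChain z c) = mapChain (OrderEmbedding.subtype _) c :=
  Subtype.ext (funext fun i => by simp [odel, consChain, mapChain])

lemma odel_succ_consChain {z : P} {n : ℕ} (c : OChain (Set.Iio z) (n + 1)) (k : Fin (n + 1)) :
    odel P k.succ (consChain z c) = consChain z (odel _ k c) :=
  Subtype.ext (funext fun i => by cases i using Fin.cases <;> simp [odel, consChain, Fin.removeNth])

variable (z : P) (n : ℕ)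

/-- The map induced on chains by the inclusion of the elements `< z`. -/
abbrev inclMap : CGrp K (Set.Iio z) n →ₗ[K] CGrp K P n :=
  chainMap (OrderEmbedding.subtype (· ∈ Set.Iio z)) n

/-- The cone operator adding a top element `z`. -/
def cone : CGrp K (Set.Iio z) n →ₗ[K] CGrp K P (n + 1) := lmapDomain K K (consChain z)

variable {z n}

lemma cone_single (c : OChain (Set.Iio z) n) (a : K) :
    cone z n (single c a) = single (consChain z c) a :=
  mapDomain_single

lemma cbdry_zero_cone (u : CGrp K (Set.Iio z) 0) : cbdry K P 0 (cone z 0 u) = inclMap z 0 u := by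
  suffices cbdry K P 0 ∘ₗ cone z 0 = inclMap z 0 from LinearMap.congr_fun this u
  ext c : 2
  simp [cone_single, chainMap_single, cbdry_single, odel_zero_consChain]

lemma cbdry_succ_cone (u : CGrp K (Set.Iio z) (n + 1)) :
    cbdry K P (n + 1) (cone z (n + 1) u) = inclMap z (n + 1) u - cone z n (cbdry K _ n u) := by
  suffices cbdry K P (n + 1) ∘ₗ cone z (n + 1) = inclMap z (n + 1) - cone z n ∘ₗ cbdry K _ n from
    LinearMap.congr_fun this u
  ext c : 2
  simp [cone_single, chainMap_single, cbdry_single, Fin.sum_univ_succ (n := n + 1),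
    odel_zero_consChain, odel_succ_consChain, pow_succ, sub_eq_add_neg]

lemma hom_ext_cone {M : Type*} [AddCommGroup M] [Module K M] {f g : CGrp K P (n + 1) →ₗ[K] M}
    (h : ∀ z u, f (cone z n u) = g (cone z n u)) : f = g := by
  ext c : 2
  obtain ⟨c', hc'⟩ := exists_consChain_eq c
  simpa [cone_single, hc'] using h (c.1 0) (single c' 1)

lemma cbdry_cbdry (n : ℕ) (u : CGrp K P (n + 2)) : cbdry K P n (cbdry K P (n + 1) u) = 0 := by
  suffices cbdry K P n ∘ₗ cbdry K P (n + 1) = 0 from LinearMap.congr_fun this u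
  clear u
  induction n generalizing P with
  | zero =>
    refine hom_ext_cone fun z u => ?_
    simp [cbdry_succ_cone, cbdry_zero_cone, cbdry_chainMap]
  | succ n ih =>
    refine hom_ext_cone fun z u => ?_
    have hu : cbdry K _ n (cbdry K _ (n + 1) u) = 0 := LinearMap.congr_fun ih u
    simp [cbdry_succ_cone, cbdry_chainMap, hu]

lemma eq_zero_of_inclMap_add_cone_eq_zero {u : CGrp K (Set.Iio z) (n + 1)}
    {v : CGrp K (Set.Iio z) n} (h : inclMap z (n + 1) u + cone z n v = 0) : u = 0 := by
  ext c
  have hc : mapChain (OrderEmbedding.subtype (· ∈ Set.Iio z)) c ∉ Set.range (consChain z) := by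
    rintro ⟨c', h'⟩
    exact (c.1 0).2.ne (congrFun (congrArg Subtype.val h') 0).symm
  simpa [chainMap, cone, mapDomain_apply (mapChain_injective _ _),
    mapDomain_of_notMem_range _ _ hc] using
    DFunLike.congr_fun h (mapChain (OrderEmbedding.subtype _) c)

lemma cbdry_add_eq_zero {u : CGrp K (Set.Iio z) (n + 1)} {v : CGrp K (Set.Iio z) n}
    (h : cbdry K P n (inclMap z (n + 1) u + cone z n v) = 0) : cbdry K _ n u + v = 0 := by
  rw [map_add, cbdry_chainMap] at h
  cases n with
  | zero =>
    rw [cbdry_zero_cone, ← map_add] at h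
    exact (map_eq_zero_iff _ (chainMap_injective _ 0)).1 h
  | succ n =>
    refine eq_zero_of_inclMap_add_cone_eq_zero (v := -cbdry K _ n v) ?_
    rw [← h, cbdry_succ_cone, map_add, map_neg]
    abel

end Chains

section Bar

open LabelledResolution

variable {K} {L : Type} [SemilatticeSup L] [OrderBot L]

/-- The largest element of a chain of elements `> ⊥`, or `⊥` for the empty chain. -/
def topLabel : ∀ n, OChain (Set.Ioi (⊥ : L)) n → L
  | 0, _ => ⊥
  | _ + 1, c => c.1 0

variable {z : Set.Ioi (⊥ : L)} {n : ℕ}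

lemma inclMap_mem (u : CGrp K (Set.Iio z) n) :
    inclMap z n u ∈ supported K K (topLabel n ⁻¹' Set.Iio z.1) := by
  suffices supported K K Set.univ ≤
      (supported K K (topLabel n ⁻¹' Set.Iio z.1)).comap (inclMap z n) from this (by simp)
  refine supported_le_comap_iff.2 fun c _ => ?_
  rw [chainMap_single]
  refine single_mem_supported K 1 ?_
  cases n with
  | zero => exact z.2
  | succ n => exact (c.1 0).2

lemma cone_mem (u : CGrp K (Set.Iio z) n) : cone z n u ∈ labelLE K (topLabel (n + 1)) z.1 := by
  suffices supported K K Set.univ ≤ (labelLE K (topLabel (n + 1)) z.1).comap (cone z n) from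
    this (by simp)
  refine supported_le_comap_iff.2 fun c _ => ?_
  rw [cone_single]
  exact single_mem_supported K 1 (le_refl z.1)

lemma isLabelled_cbdry (n : ℕ) :
    IsLabelled (topLabel (L := L) (n + 1)) (topLabel n) (cbdry K _ n) := fun c => by
  rw [cbdry_single]
  refine sum_mem fun k _ => Submodule.smul_mem _ _ (single_mem_supported K _ ?_)
  cases n with
  | zero => exact bot_le
  | succ n => exact c.2.antitone (Fin.zero_le _)

lemma exists_inclMap_eq (x : CGrp K (Set.Ioi (⊥ : L)) 0) : ∃ u, inclMap z 0 u = x := by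
  suffices supported K K Set.univ ≤ (LinearMap.range (inclMap z 0)).comap .id from this (by simp)
  refine supported_le_comap_iff.2 fun c _ => ⟨single default 1, ?_⟩
  rw [chainMap_single, Subsingleton.elim c]
  rfl

lemma exists_inclMap_add_cone_eq {x : CGrp K (Set.Ioi (⊥ : L)) (n + 1)}
    (hx : x ∈ labelLE K (topLabel (n + 1)) z.1) : ∃ u v, inclMap z (n + 1) u + cone z n v = x := by
  suffices labelLE K (topLabel (n + 1)) z.1 ≤
      (LinearMap.range (inclMap z (n + 1)) ⊔ LinearMap.range (cone z n)).comap .id by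
    obtain ⟨_, ⟨u, rfl⟩, _, ⟨v, rfl⟩, huv⟩ := Submodule.mem_sup.1 (this hx)
    exact ⟨u, v, huv⟩
  refine supported_le_comap_iff.2 fun c hc => ?_
  obtain hlt | rfl := (show c.1 0 ≤ z from hc).lt_or_eq
  · obtain ⟨c', rfl⟩ := exists_mapChain_eq fun i => (c.2.antitone (Fin.zero_le i)).trans_lt hlt
    exact Submodule.mem_sup_left ⟨single c' 1, chainMap_single _ c' 1⟩
  · obtain ⟨c', hc'⟩ := exists_consChain_eq c
    exact Submodule.mem_sup_right ⟨single c' 1, by simp [cone_single, hc']⟩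

lemma labelLE_topLabel_inf_cycles_le (z : Set.Ioi (⊥ : L)) (n : ℕ) :
    labelLE K (topLabel n) z.1 ⊓ cycles (cbdry K (Set.Ioi (⊥ : L))) n ≤
      (labelLE K (topLabel (n + 1)) z.1).map (cbdry K _ n) := by
  rintro x ⟨hx, hdx⟩
  cases n with
  | zero =>
    obtain ⟨u, rfl⟩ := exists_inclMap_eq (z := z) x
    exact ⟨cone z 0 u, cone_mem u, cbdry_zero_cone u⟩
  | succ n =>
    obtain ⟨u, v, rfl⟩ := exists_inclMap_add_cone_eq hx
    refine ⟨cone z (n + 1) u, cone_mem u, ?_⟩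
    rw [cbdry_succ_cone, eq_neg_of_add_eq_zero_left (cbdry_add_eq_zero hdx), map_neg,
      sub_neg_eq_add]

variable (K L) in
/-- The bar resolution, spanned by the chains of elements `> ⊥`. -/
def barResolution : LabelledResolution K L where
  ι n := OChain (Set.Ioi (⊥ : L)) n
  label := topLabel
  d n := cbdry K _ n
  isLabelled_d := isLabelled_cbdry
  d_d := cbdry_cbdry
  unique := inferInstance
  label_zero _ := rfl
  bot_lt_label _ c := (c.1 0).2
  exact z hz := labelLE_topLabel_inf_cycles_le ⟨z, hz⟩

/-- The chains with top element `z` correspond to the chains of elements `< z`. -/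
def coneEquiv (z : Set.Ioi (⊥ : L)) (n : ℕ) :
    OChain (Set.Iio z) n ≃ topLabel (n + 1) ⁻¹' {z.1} :=
  Equiv.ofBijective (fun c => ⟨consChain z c, rfl⟩)
    ⟨fun _ _ h => consChain_injective z n (congrArg Subtype.val h), by
      rintro ⟨c, hc⟩
      obtain rfl : c.1 0 = z := Subtype.ext hc
      obtain ⟨c', hc'⟩ := exists_consChain_eq c
      exact ⟨c', Subtype.ext hc'⟩⟩

lemma subtypeDomain_cone (u : CGrp K (Set.Iio z) n) :
    subtypeDomain (· ∈ topLabel (n + 1) ⁻¹' {z.1}) (cone z n u) =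
      Finsupp.domLCongr (R := K) (coneEquiv z n) u := by
  suffices lsubtypeDomain (R := K) (topLabel (n + 1) ⁻¹' {z.1}) ∘ₗ cone z n =
      (Finsupp.domLCongr (R := K) (coneEquiv z n)).toLinearMap from LinearMap.congr_fun this u
  ext c : 2
  simp only [LinearMap.comp_apply, lsingle_apply, cone_single, lsubtypeDomain_apply,
    LinearEquiv.coe_coe, Finsupp.domLCongr_single]
  exact subtypeDomain_single (coneEquiv z n c)

lemma strandMap_cbdry (u : CGrp K (Set.Iio z) (n + 1)) :
    strandMap (topLabel (n + 2)) (topLabel (n + 1)) z.1 (cbdry K _ (n + 1))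
      (Finsupp.domLCongr (R := K) (coneEquiv z (n + 1)) u) =
      -Finsupp.domLCongr (R := K) (coneEquiv z n) (cbdry K _ n u) := by
  rw [← subtypeDomain_cone, (isLabelled_cbdry (n + 1)).strandMap_subtypeDomain (cone_mem u),
    cbdry_succ_cone, ← subtypeDomain_cone, subtypeDomain_sub,
    subtypeDomain_eq_zero (disjoint_preimage_Iio _ _) (inclMap_mem u), zero_sub]

theorem isAcyclicAt_barResolution_iff (z : Set.Ioi (⊥ : L)) (n : ℕ) :
    (barResolution K L).IsAcyclicAt z.1 (n + 1) ↔ IsExactAt (cbdry K (Set.Iio z)) n := by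
  have : IsEmpty ((barResolution K L).label 0 ⁻¹' {z.1}) :=
    ⟨fun i => (show ⊥ < z.1 from z.2).ne i.2⟩
  rw [IsAcyclicAt, isExactAt_succ_iff, ← isExactAt_neg]
  refine (isExactAt_congr (fun n => Finsupp.domLCongr (coneEquiv z n)) (fun n u => ?_) n).symm
  exact (neg_eq_iff_eq_neg.2 (strandMap_cbdry u)).symm

end Bar

section BettiSupport

open LabelledResolution

variable (L : Type) [SemilatticeSup L] [OrderBot L]

/-- The multidegrees `m` in `L` at which the `n`-th Betti number of the simple functor at `⊥` is
nonzero, expressed, as for the lcm-lattice of a monomial ideal, through the reduced homology of the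
open interval `(⊥, m)` in degree `n - 2`, which is level `n - 1`. -/
def bettiSupport : ℕ → Set L
  | 0 => {⊥}
  | n + 1 => {m | ⊥ < m ∧ RHomNontrivial K (Set.Ioo ⊥ m) n}

variable {K L}

/-- The lower part of `z` in the elements `> ⊥` is the open interval `(⊥, z)`. -/
def iioOrderIsoIoo (z : Set.Ioi (⊥ : L)) : Set.Iio z ≃o Set.Ioo ⊥ z.1 where
  toFun x := ⟨x.1.1, x.1.2, x.2⟩
  invFun x := ⟨⟨x.1, x.2.1⟩, x.2.2⟩
  map_rel_iff' := Iff.rfl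

lemma mem_bettiSupport_iff {n : ℕ} {m : L} :
    m ∈ bettiSupport K L n ↔ ¬ (barResolution K L).IsAcyclicAt m n := by
  cases n with
  | zero => rw [isAcyclicAt_zero_iff, not_not]; rfl
  | succ n =>
    have hiff (hm : ⊥ < m) :
        RHomNontrivial K (Set.Ioo ⊥ m) n ↔ ¬ (barResolution K L).IsAcyclicAt m (n + 1) := by
      rw [isAcyclicAt_barResolution_iff ⟨m, hm⟩, ← rHomNontrivial_iff]
      exact (rHomNontrivial_congr (iioOrderIsoIoo ⟨m, hm⟩) n).symm
    refine ⟨fun ⟨hm, h⟩ => (hiff hm).1 h, fun h => ?_⟩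
    have hm := bot_lt_iff_ne_bot.2 ((barResolution K L).ne_bot_of_not_isAcyclicAt_succ h)
    exact ⟨hm, (hiff hm).2 h⟩

variable [WellFoundedLT L]

variable (K L) in
theorem bettiSupport_add_subset (i₁ i₂ : ℕ) :
    bettiSupport K L (i₁ + i₂) ⊆
      Set.image2 (· ⊔ ·) (bettiSupport K L i₁) (bettiSupport K L i₂) := by
  intro m hm
  obtain ⟨X, hX⟩ := exists_isMinimal K L
  have label_mem (n : ℕ) (i : X.ι n) : X.label n i ∈ bettiSupport K L n :=
    mem_bettiSupport_iff.2 fun h => hX.not_isAcyclicAt_label n i (h.of_resolution X)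
  obtain ⟨i, j, rfl⟩ := X.exists_sup_eq_of_not_isAcyclicAt X fun h =>
    mem_bettiSupport_iff.1 hm (h.of_resolution (barResolution K L))
  exact ⟨_, label_mem i₁ i, _, label_mem i₂ j, rfl⟩

variable (K L) in
theorem count_multigraded_shifts_submultiplicative_general (i₁ i₂ : ℕ) :
    (bettiSupport K L (i₁ + i₂)).encard ≤
      (bettiSupport K L i₁).encard * (bettiSupport K L i₂).encard := by
  refine (Set.encard_le_encard (bettiSupport_add_subset K L i₁ i₂)).trans ?_
  rw [← Set.image_uncurry_prod, ← Set.encard_prod]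
  exact Set.encard_image_le _ _

end BettiSupport

section LcmLattice

variable {K}

lemma finrank_cyclesAt_sub_ne_zero_iff {P : Type} [Preorder P] [Finite P] (n : ℕ) :
    Module.finrank K (cyclesAt K P n) - Module.finrank K (boundariesIn K P n) ≠ 0 ↔
      RHomNontrivial K P n := by
  have hle : boundariesIn K P n ≤ cyclesAt K P n := by
    rintro _ ⟨u, rfl⟩
    cases n with
    | zero => trivial
    | succ n => exact cbdry_cbdry n u
  rw [RHomNontrivial, ne_eq, Nat.sub_eq_zero_iff_le]
  exact not_congr ⟨fun h => (Submodule.eq_of_le_of_finrank_le hle h).ge, Submodule.finrank_mono⟩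

variable {nv : ℕ} (I : Ideal (PolyS K nv))

lemma finite_minGens : (minGens K nv I).Finite :=
  WellQuasiOrderedLE.finite_of_isAntichain fun d hd _ hd' hne hle =>
    hd'.2 d (lt_of_le_of_ne hle hne) hd.1

lemma finite_lcmSet : (lcmSet K nv I).Finite := by
  refine ((finite_minGens I).finite_subsets.preimage Finset.coe_injective.injOn).image
    (fun B => B.sup id) |>.subset ?_
  rintro _ ⟨B, hB, rfl⟩
  exact ⟨B, hB, rfl⟩

lemma sup_mem_lcmSet {x y : Fin nv → ℕ} (hx : x ∈ lcmSet K nv I) (hy : y ∈ lcmSet K nv I) :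
    x ⊔ y ∈ lcmSet K nv I := by
  classical
  obtain ⟨B, hB, rfl⟩ := hx
  obtain ⟨C, hC, rfl⟩ := hy
  exact ⟨B ∪ C, by simp [hB, hC], Finset.sup_union.symm⟩

instance : SemilatticeSup (lcmSet K nv I) :=
  Subtype.semilatticeSup fun _ _ hx hy => sup_mem_lcmSet I hx hy

instance : OrderBot (lcmSet K nv I) where
  bot := ⟨0, ∅, by simp, rfl⟩
  bot_le x := Subtype.coe_le_coe.1 (zero_le (a := x.1))

instance : Finite (lcmSet K nv I) := finite_lcmSet I

instance (m : Fin nv → ℕ) : Finite (openInt K nv I m) :=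
  (finite_lcmSet I).subset fun _ h => h.1

/-- `openInt` is an open interval of the semilattice `lcmSet`. -/
def iooOrderIsoOpenInt (m : lcmSet K nv I) : Set.Ioo ⊥ m ≃o openInt K nv I m.1 where
  toFun x := ⟨x.1.1, x.1.2, x.2.1, x.2.2⟩
  invFun x := ⟨⟨x.1, x.2.1⟩, x.2.2.1, x.2.2.2⟩
  map_rel_iff' := Iff.rfl

lemma multiBetti_ne_zero_iff {i : ℕ} {m : lcmSet K nv I} :
    multiBetti K nv I i m ≠ 0 ↔ m ∈ bettiSupport K (lcmSet K nv I) i := by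
  have hm : m.1 = 0 ↔ m = ⊥ := (Subtype.ext_iff (a2 := ⊥)).symm
  cases i with
  | zero => simp [multiBetti, bettiSupport, hm]
  | succ n =>
    have hred := (finrank_cyclesAt_sub_ne_zero_iff n).trans
      (rHomNontrivial_congr (K := K) (iooOrderIsoOpenInt I m) n).symm
    simp [multiBetti, bettiSupport, bot_lt_iff_ne_bot, hm, ← hred]

lemma multiBetti_eq_zero_of_notMem {m : Fin nv → ℕ} (hm : m ∉ lcmSet K nv I) (i : ℕ) :
    multiBetti K nv I i m = 0 := by
  have hm0 : m ≠ 0 := fun h => hm (h ▸ (⊥ : lcmSet K nv I).2)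
  simp [multiBetti, hm, hm0]

lemma setOf_multiBetti_ne_zero (i : ℕ) : {m | multiBetti K nv I i m ≠ 0} =
    Subtype.val '' bettiSupport K (lcmSet K nv I) i := by
  refine Set.Subset.antisymm (fun m hm => ?_) ?_
  · have hmI : m ∈ lcmSet K nv I := Not.imp_symm (multiBetti_eq_zero_of_notMem I · i) hm
    exact ⟨⟨m, hmI⟩, (multiBetti_ne_zero_iff I).1 hm, rfl⟩
  · rintro _ ⟨m, hm, rfl⟩
    exact (multiBetti_ne_zero_iff I).2 hm

lemma cast_acount (i : ℕ) :
    (acount K nv I i : ℕ∞) = (bettiSupport K (lcmSet K nv I) i).encard := by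
  rw [acount, setOf_multiBetti_ne_zero, Set.Finite.cast_ncard_eq (Set.toFinite _),
    Subtype.val_injective.encard_image]

end LcmLattice

/-- Let `I` be a monomial ideal in `S = K[x₁, …, xₙ]` and let
`a_i(S/I)` be the number of multidegrees `m` with `β_{i,m}(S/I) ≠ 0`.  Then for all
`i₁, i₂ ≥ 0` one has `a_{i₁+i₂}(S/I) ≤ a_{i₁}(S/I) · a_{i₂}(S/I)`. -/
theorem count_multigraded_shifts_submultiplicative (nv : ℕ) (I : Ideal (PolyS K nv))
    (hI : IsMonomialIdeal K nv I) (i₁ i₂ : ℕ) :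
    acount K nv I (i₁ + i₂) ≤ acount K nv I i₁ * acount K nv I i₂ := by
  simpa only [← Nat.cast_le (α := ℕ∞), Nat.cast_mul, cast_acount] using
    count_multigraded_shifts_submultiplicative_general K (lcmSet K nv I) i₁ i₂

end
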